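/- Fix an integer T ≥ 1, real arrival times σ_1 < σ_2 < ⋯ < σ_T, a nondecreasing function F : ℝ → ℝ with 0 ≤ F(x) ≤ 1 for all x, and p ∈ [0,1]^T, and let η be the availability sequence of the fluid (F, σ, p) process. Then 0 ≤ η_t ≤ 1 for every t ∈ {1,…,T}, and moreover η_t ≥ (1 − p_{t−1}) · η_{t−1} for every t ∈ {2,…,T}. -/

import Mathlib

/-- The availability sequence of the fluid `(F, σ, p)` process (0-based indexing):
`fluidEta F σ p t = 1 − Σ_{τ < t} p τ · fluidEta F σ p τ · (1 − F (σ t − σ τ))`. -/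
noncomputable def fluidEta (F : ℝ → ℝ) (σ p : ℕ → ℝ) : ℕ → ℝ
  | t => 1 - ∑ τ ∈ (Finset.range t).attach,
      p τ.1 * fluidEta F σ p τ.1 * (1 - F (σ t - σ τ.1))
  decreasing_by exact Finset.mem_range.mp τ.2

/-- Unfolding of the availability sequence without `attach`. -/
theorem fluidEta_eq (F : ℝ → ℝ) (σ p : ℕ → ℝ) (t : ℕ) :
    fluidEta F σ p t = 1 - ∑ τ ∈ Finset.range t,
      p τ * fluidEta F σ p τ * (1 - F (σ t - σ τ)) := by
  rw [fluidEta, Finset.sum_attach (Finset.range t)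
    (fun τ => p τ * fluidEta F σ p τ * (1 - F (σ t - σ τ)))]

/-- **Well-definedness of the fluid process**: the available fraction always lies in
`[0,1]`, and it decreases at each arrival by at most the consumed amount, i.e.
`η_t ≥ (1 − p_{t−1}) · η_{t−1}`. -/
theorem fluid_eta_bounds
    (T : ℕ) (hT : 1 ≤ T) (σ : ℕ → ℝ)
    (hσ : ∀ s t, s < t → t < T → σ s < σ t)
    (F : ℝ → ℝ) (hF : Monotone F) (hF0 : ∀ x, 0 ≤ F x) (hF1 : ∀ x, F x ≤ 1)
    (p : ℕ → ℝ) (hp : ∀ t, t < T → 0 ≤ p t ∧ p t ≤ 1) :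
    (∀ t, t < T → 0 ≤ fluidEta F σ p t ∧ fluidEta F σ p t ≤ 1) ∧
    (∀ t, 1 ≤ t → t < T →
        (1 - p (t - 1)) * fluidEta F σ p (t - 1) ≤ fluidEta F σ p t) := by
  have step : ∀ t, t + 1 < T → (∀ s, s ≤ t → 0 ≤ fluidEta F σ p s) →
      (1 - p t) * fluidEta F σ p t ≤ fluidEta F σ p (t + 1) := by
    intro t ht h
    rw [fluidEta_eq F σ p (t + 1), Finset.sum_range_succ]
    have h1 : ∑ τ ∈ Finset.range t, p τ * fluidEta F σ p τ * (1 - F (σ (t + 1) - σ τ))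
        ≤ ∑ τ ∈ Finset.range t, p τ * fluidEta F σ p τ * (1 - F (σ t - σ τ)) := by
      apply Finset.sum_le_sum
      intro τ hτ
      have hτ' := Finset.mem_range.mp hτ
      apply mul_le_mul_of_nonneg_left
      · have := hF (show σ t - σ τ ≤ σ (t + 1) - σ τ by
          linarith [hσ t (t + 1) (by omega) ht])
        linarith
      · exact mul_nonneg (hp τ (by omega)).1 (h τ (by omega))
    have h2 := fluidEta_eq F σ p t
    have h3 : 0 ≤ p t * fluidEta F σ p t * F (σ (t + 1) - σ t) :=
      mul_nonneg (mul_nonneg (hp t (by omega)).1 (h t le_rfl)) (hF0 _)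
    linarith
  have nonneg : ∀ t, t < T → 0 ≤ fluidEta F σ p t := by
    intro t
    induction t using Nat.strong_induction_on with
    | _ t ih =>
      intro ht
      cases t with
      | zero => rw [fluidEta_eq]; simp
      | succ t =>
        refine le_trans ?_ (step t ht fun s hs => ih s (by omega) (by omega))
        exact mul_nonneg (by linarith [(hp t (by omega)).2]) (ih t (by omega) (by omega))
  refine ⟨fun t ht => ⟨nonneg t ht, ?_⟩, ?_⟩
  · rw [fluidEta_eq]
    have : 0 ≤ ∑ τ ∈ Finset.range t, p τ * fluidEta F σ p τ * (1 - F (σ t - σ τ)) := by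
      apply Finset.sum_nonneg
      intro τ hτ
      have hτ' := Finset.mem_range.mp hτ
      exact mul_nonneg (mul_nonneg (hp τ (by omega)).1 (nonneg τ (by omega)))
        (by linarith [hF1 (σ t - σ τ)])
    linarith
  · intro t h1 ht
    obtain ⟨s, rfl⟩ : ∃ s, t = s + 1 := ⟨t - 1, by omega⟩
    exact step s ht fun r hr => nonneg r (by omega)
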